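/- Let M be a nonempty connected Hausdorff topological space, let f, g : M → M be homeomorphisms, and let N ≥ 1 be an integer. Let P = {x ∈ M : f^p(x) = x for some integer p with 1 ≤ p ≤ 2N} be the set of periodic points of f of period at most 2N. Assume that M \ P is dense in M and connected in the subspace topology, and that for every x ∈ M \ P there exists an integer i with |i| ≤ N and g(x) = f^i(x). Then there exists an integer i with |i| ≤ N such that g = f^i on all of M. -/

import Mathlib

/-!
Off the points of period at most `2N`, the values `f^i x` with `|i| ≤ N` are pairwise distinct, so
there the closed sets `{g = f^i}`, `|i| ≤ N`, form a finite partition. By connectedness one of them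
is everything, and the equality `g = f^i` extends from a dense set to the whole space.
-/

/-- The `n`-th iterate (`n ∈ ℤ`) of a homeomorphism `f`, negative `n` denoting iterates
of `f⁻¹`, obtained as the `n`-th power of the underlying permutation. -/
def zIter {M : Type*} [TopologicalSpace M] (f : M ≃ₜ M) (n : ℤ) : M → M :=
  ⇑(f.toEquiv ^ n : Equiv.Perm M)

open Function Set

section Connected

variable {ι X Y : Type*} [Finite ι] [TopologicalSpace X] [ConnectedSpace X]

theorem exists_eq_univ_of_isClosed_of_pairwise_disjoint {C : ι → Set X}
    (hclosed : ∀ i, IsClosed (C i)) (hdisj : Pairwise (Disjoint on C))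
    (hcover : ⋃ i, C i = univ) : ∃ i, C i = univ := by
  obtain ⟨x⟩ : Nonempty X := inferInstance
  obtain ⟨i, hxi⟩ := iUnion_eq_univ_iff.mp hcover x
  have hcompl : (C i)ᶜ = ⋃ j ∈ ({i}ᶜ : Set ι), C j := by
    ext y
    simp only [mem_compl_iff, mem_iUnion, mem_singleton_iff, exists_prop]
    constructor
    · intro hyi
      obtain ⟨j, hyj⟩ := iUnion_eq_univ_iff.mp hcover y
      exact ⟨j, fun hji ↦ hyi (hji ▸ hyj), hyj⟩
    · rintro ⟨j, hji, hyj⟩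
      exact disjoint_left.mp (hdisj hji) hyj
  have hopen : IsOpen (C i) := by
    rw [← isClosed_compl_iff, hcompl]
    exact (toFinite _).isClosed_biUnion fun j _ ↦ hclosed j
  exact ⟨i, IsClopen.eq_univ ⟨hclosed i, hopen⟩ ⟨x, hxi⟩⟩

theorem exists_forall_eq_of_forall_exists_eq [TopologicalSpace Y] [T2Space Y]
    {φ : ι → X → Y} {g : X → Y} (hφ : ∀ i, Continuous (φ i)) (hg : Continuous g)
    (hinj : ∀ x, Injective fun i ↦ φ i x) (hloc : ∀ x, ∃ i, g x = φ i x) :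
    ∃ i, ∀ x, g x = φ i x := by
  have hdisj : Pairwise (Disjoint on fun i ↦ {x | g x = φ i x}) := fun i j hij ↦
    disjoint_left.mpr fun x hi hj ↦ hij (hinj x (hi.symm.trans hj))
  obtain ⟨i, hi⟩ := exists_eq_univ_of_isClosed_of_pairwise_disjoint
    (fun i ↦ isClosed_eq hg (hφ i)) hdisj (iUnion_eq_univ_iff.mpr hloc)
  exact ⟨i, eq_univ_iff_forall.mp hi⟩

end Connected

/-- The set of periodic points of `f` having some period `p` with `1 ≤ p ≤ n`; the minimal period
is not singled out, which changes nothing as it is at most any other period. -/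
def periodicPtsLE {M : Type*} (f : M → M) (n : ℕ) : Set M :=
  {x | ∃ p : ℕ, 1 ≤ p ∧ p ≤ n ∧ f^[p] x = x}

section Iterates

variable {M : Type*} [TopologicalSpace M] (f : M ≃ₜ M)

theorem zIter_eq_coe_zpow (n : ℤ) : zIter f n = ⇑(f ^ n) := by
  let toPerm : (M ≃ₜ M) →* Equiv.Perm M :=
    { toFun := Homeomorph.toEquiv, map_one' := rfl, map_mul' := fun _ _ ↦ rfl }
  exact congrArg DFunLike.coe (map_zpow toPerm f n).symm

theorem continuous_zIter (n : ℤ) : Continuous (zIter f n) := by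
  rw [zIter_eq_coe_zpow]
  exact (f ^ n).continuous

theorem zIter_eq_self_iff (n : ℤ) (x : M) : zIter f n x = x ↔ IsPeriodicPt f n.natAbs x := by
  have hnat (k : ℕ) : (f.toEquiv ^ k) x = x ↔ IsPeriodicPt f k x := by
    rw [Equiv.Perm.coe_pow]
    rfl
  rw [← hnat, zIter]
  rcases n.natAbs_eq with h | h
  · rw [h, zpow_natCast, Int.natAbs_natCast]
  · rw [h, zpow_neg, zpow_natCast, Int.natAbs_neg, Int.natAbs_natCast,
      Equiv.Perm.inv_eq_iff_eq, eq_comm]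

theorem zIter_eq_zIter_iff (i j : ℤ) (x : M) :
    zIter f i x = zIter f j x ↔ IsPeriodicPt f (i - j).natAbs x := by
  rw [← zIter_eq_self_iff, zIter, zIter, zIter, sub_eq_neg_add, zpow_add, zpow_neg,
    Equiv.Perm.mul_apply, Equiv.Perm.inv_eq_iff_eq]

variable {f} in
theorem injOn_zIter_of_notMem_periodicPtsLE {N : ℕ} {x : M} (hx : x ∉ periodicPtsLE f (2 * N)) :
    InjOn (fun i ↦ zIter f i x) (Icc (-N : ℤ) N) := by
  rintro i ⟨hi, hi'⟩ j ⟨hj, hj'⟩ hij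
  by_contra hne
  exact hx ⟨(i - j).natAbs, by omega, by omega, (zIter_eq_zIter_iff f i j x).mp hij⟩

end Iterates

theorem global_power_from_local_powers_general {M : Type*} [TopologicalSpace M] [T2Space M]
    (f : M ≃ₜ M) {g : M → M} (hg : Continuous g) (N : ℕ)
    (hdense : Dense (periodicPtsLE f (2 * N))ᶜ) (hconn : IsConnected (periodicPtsLE f (2 * N))ᶜ)
    (hloc : ∀ x ∈ (periodicPtsLE f (2 * N))ᶜ, ∃ i : ℤ, |i| ≤ (N : ℤ) ∧ g x = zIter f i x) :
    ∃ i : ℤ, |i| ≤ (N : ℤ) ∧ ∀ x : M, g x = zIter f i x := by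
  have : ConnectedSpace ↥(periodicPtsLE f (2 * N))ᶜ := Subtype.connectedSpace hconn
  obtain ⟨⟨i, hi⟩, hgi⟩ := exists_forall_eq_of_forall_exists_eq
    (φ := fun (i : Icc (-N : ℤ) N) (x : ↥(periodicPtsLE f (2 * N))ᶜ) ↦ zIter f i x)
    (fun i ↦ (continuous_zIter f i).comp continuous_subtype_val)
    (hg.comp continuous_subtype_val)
    (fun x ↦ (injOn_zIter_of_notMem_periodicPtsLE x.2).injective)
    (fun x ↦ let ⟨i, hi, hgi⟩ := hloc x x.2; ⟨⟨i, abs_le.mp hi⟩, hgi⟩)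
  have hext : g = zIter f i :=
    hg.ext_on hdense (continuous_zIter f i) fun x hx ↦ hgi ⟨x, hx⟩
  exact ⟨i, abs_le.mpr hi, congrFun hext⟩

/-- Let `M` be a nonempty connected Hausdorff space, `f, g` homeomorphisms of `M`, `N ≥ 1`,
and `P` the set of periodic points of `f` of period at most `2N`. If `M \ P` is dense and
connected, and every `x ∈ M \ P` satisfies `g x = f^i x` for some integer `|i| ≤ N`, then
there is a single integer `i` with `|i| ≤ N` such that `g = f^i` on all of `M`. -/
theorem global_power_from_local_powers
    {M : Type*} [TopologicalSpace M] [Nonempty M] [ConnectedSpace M] [T2Space M]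
    (f g : M ≃ₜ M) (N : ℕ) (hN : 1 ≤ N)
    (P : Set M) (hP : P = {x : M | ∃ p : ℕ, 1 ≤ p ∧ p ≤ 2 * N ∧ (⇑f)^[p] x = x})
    (hdense : Dense Pᶜ) (hconn : IsConnected Pᶜ)
    (hloc : ∀ x ∈ Pᶜ, ∃ i : ℤ, |i| ≤ (N : ℤ) ∧ g x = zIter f i x) :
    ∃ i : ℤ, |i| ≤ (N : ℤ) ∧ ∀ x : M, g x = zIter f i x := by
  subst hP
  exact global_power_from_local_powers_general f g.continuous N hdense hconn hloc
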